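/- Let n ≥ 2 and let b be an n×n real upper triangular matrix with Δ^m_k(b) > 0 for all 1 ≤ k ≤ m ≤ n. Then there exists an upper unitriangular matrix U such that b·w̄_0 = L·D·U, where D is the diagonal matrix with D_{ii} = Δ^n_i(b)/Δ^n_{i−1}(b) for 1 ≤ i ≤ n, and L = L_1(u^1) L_2(u^2) ⋯ L_{n−1}(u^{n−1}) with u^m_i = (Δ^m_{i−1}(b) · Δ^{m+1}_{i+1}(b)) / (Δ^m_i(b) · Δ^{m+1}_i(b)) for 1 ≤ i ≤ m < n. -/

import Mathlib

/-- The minor `Δ^m_k(b)`: determinant of the `k × k` submatrix of `b` with rows `1,…,k`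
and columns `m−k+1,…,m` (1-based); `Δ^m_0(b) = 1`. -/
noncomputable def Delta {n : ℕ} (b : Matrix (Fin n) (Fin n) ℝ) (k m : ℕ) : ℝ :=
  Matrix.det (Matrix.of fun i j : Fin k =>
    if h : (i : ℕ) < n ∧ m - k + (j : ℕ) < n then b ⟨i, h.1⟩ ⟨m - k + (j : ℕ), h.2⟩ else 0)

/-- `l_{p+1}(a) = I_n + a f_{p+1}` (1-based index `i = p+1`): identity plus `a` in
entry `(p+2, p+1)` (1-based), i.e. `(p+1, p)` (0-based). -/
def lmat {n : ℕ} (p : ℕ) (a : ℝ) : Matrix (Fin n) (Fin n) ℝ :=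
  1 + Matrix.of (fun i j : Fin n => if (i : ℕ) = p + 1 ∧ (j : ℕ) = p then a else 0)

/-- `L_m(u) = l_m(u_m) l_{m−1}(u_{m−1}) ⋯ l_1(u_1)`, where `u p` is the entry `u_{p+1}`. -/
def Lmat {n : ℕ} (m : ℕ) (u : ℕ → ℝ) : Matrix (Fin n) (Fin n) ℝ :=
  (((List.range m).reverse).map (fun p => lmat (n := n) p (u p))).prod

/-- `w̄_0`: the matrix with entry `(−1)^{n−i}` in position `(i, n+1−i)` (1-based). -/
def wbar (n : ℕ) : Matrix (Fin n) (Fin n) ℝ :=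
  Matrix.of fun i j : Fin n =>
    if (j : ℕ) = n - 1 - (i : ℕ) then (-1 : ℝ) ^ (n - 1 - (i : ℕ)) else 0

/-!
Gaussian elimination, one factor `L_m` at a time. Put `M₀ = b` and `M_r = L_r(u^r)⁻¹ M_{r-1}`. Left
multiplication by `L_r` adds to each row a multiple of an earlier row, so it does not change the
minors `Δ^m_k`, which involve the top `k` rows. By induction `M_r` is upper triangular except that
the triangle in its first `r + 1` columns is turned upside down. For a matrix of this shape the
minors needed at the next stage are products of single entries with smaller minors, and this
identifies the multipliers that clear the next column as the quotients `u^{r+1}_i`. For `r = n - 1`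
the whole matrix is anti-triangular: `M_{n-1} w̄₀` is upper triangular, and its diagonal is again
read off from the minors.
-/

open Matrix

theorem det_eq_of_row_eq_zero_of_ne {R : Type*} [CommRing R] {k : ℕ}
    (A : Matrix (Fin (k + 1)) (Fin (k + 1)) R) (i j : Fin (k + 1))
    (h : ∀ j' ≠ j, A i j' = 0) :
    A.det = (-1) ^ (i + j : ℕ) * A i j * (A.submatrix i.succAbove j.succAbove).det := by
  rw [det_succ_row A i, Finset.sum_eq_single j]
  · intro j' _ hj'
    rw [h j' hj', mul_zero, zero_mul]
  · simp

theorem exists_unitriangular_eq_diagonal_mul {ι K : Type*} [LT ι] [Fintype ι]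
    [DecidableEq ι] [DivisionSemiring K] {T : Matrix ι ι K} (hT : T.IsUpperTriangular)
    (hdiag : ∀ i, T i i ≠ 0) :
    ∃ U : Matrix ι ι K, (∀ i, U i i = 1) ∧ U.IsUpperTriangular ∧
      T = diagonal (fun i => T i i) * U := by
  refine ⟨diagonal (fun i => (T i i)⁻¹) * T, fun i => ?_, fun i j hij => ?_, ?_⟩
  · rw [diagonal_mul, inv_mul_cancel₀ (hdiag i)]
  · rw [diagonal_mul, hT hij, mul_zero]
  · ext i j
    rw [diagonal_mul, diagonal_mul, mul_inv_cancel_left₀ (hdiag i)]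

section

variable {n : ℕ}

/-- The extension of a matrix by zeros to indices in `ℕ`, so that the rows and columns of `Delta`
can be indexed without bounds. -/
def zeroExtend (M : Matrix (Fin n) (Fin n) ℝ) (i j : ℕ) : ℝ :=
  if h : i < n ∧ j < n then M ⟨i, h.1⟩ ⟨j, h.2⟩ else 0

theorem zeroExtend_val (M : Matrix (Fin n) (Fin n) ℝ) (i j : Fin n) :
    zeroExtend M i j = M i j := by
  simp [zeroExtend]

theorem zeroExtend_eq_zero_of_le_row (M : Matrix (Fin n) (Fin n) ℝ) {i : ℕ} (hi : n ≤ i) (j : ℕ) :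
    zeroExtend M i j = 0 :=
  dif_neg fun h => hi.not_gt h.1

theorem Delta_add_right (M : Matrix (Fin n) (Fin n) ℝ) (k c : ℕ) :
    Delta M k (c + k) = (of fun i j : Fin k => zeroExtend M i (c + j)).det := by
  simp only [Delta, zeroExtend, Nat.add_sub_cancel]

theorem Delta_zero (M : Matrix (Fin n) (Fin n) ℝ) (m : ℕ) : Delta M 0 m = 1 :=
  det_fin_zero

theorem Delta_self (M : Matrix (Fin n) (Fin n) ℝ) : Delta M n n = M.det := by
  unfold Delta
  congr 1
  ext i j
  simp

theorem Delta_succ_of_last_row_eq_zero_left (M : Matrix (Fin n) (Fin n) ℝ) (k c : ℕ)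
    (h : ∀ j < k, zeroExtend M k (c + j) = 0) :
    Delta M (k + 1) (c + k + 1) = zeroExtend M k (c + k) * Delta M k (c + k) := by
  rw [add_assoc, Delta_add_right, Delta_add_right,
    det_eq_of_row_eq_zero_of_ne _ (Fin.last k) (Fin.last k)]
  · simp [submatrix, Even.neg_one_pow ⟨k, rfl⟩]
  · intro j hj
    exact h j (Fin.val_lt_last hj)

theorem Delta_succ_of_last_row_eq_zero_right (M : Matrix (Fin n) (Fin n) ℝ) (k c : ℕ)
    (h : ∀ j < k, zeroExtend M k (c + 1 + j) = 0) :
    Delta M (k + 1) (c + (k + 1)) =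
      (-1) ^ k * zeroExtend M k c * Delta M k (c + (k + 1)) := by
  have hc : c + (k + 1) = c + 1 + k := by ring
  rw [Delta_add_right, hc, Delta_add_right, det_eq_of_row_eq_zero_of_ne _ (Fin.last k) 0]
  · simp [submatrix, add_assoc, add_comm 1]
  · intro j hj
    obtain ⟨j, rfl⟩ := Fin.exists_succ_eq_of_ne_zero hj
    simpa [add_assoc, add_comm 1] using h j j.2

theorem lmat_eq_transvection {p : ℕ} (hp : p + 1 < n) (a : ℝ) :
    lmat p a = transvection (⟨p + 1, hp⟩ : Fin n) ⟨p, by omega⟩ a := by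
  ext i j
  simp [lmat, transvection, single, Fin.ext_iff, eq_comm]

theorem lmat_eq_one {p : ℕ} (hp : n ≤ p + 1) (a : ℝ) : lmat (n := n) p a = 1 := by
  ext i j
  simp [lmat, show (i : ℕ) ≠ p + 1 by omega]

theorem zeroExtend_lmat_mul (p : ℕ) (a : ℝ) (M : Matrix (Fin n) (Fin n) ℝ) (i j : ℕ) :
    zeroExtend (lmat p a * M) i j =
      zeroExtend M i j + if i = p + 1 ∧ i < n then a * zeroExtend M p j else 0 := by
  by_cases hp : p + 1 < n
  · rw [lmat_eq_transvection hp]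
    by_cases hi : i < n <;> by_cases hj : j < n
    · by_cases hip : i = p + 1
      · subst hip
        simp [zeroExtend, hi, hj, (show p < n by omega)]
      · simp [zeroExtend, hi, hj, hip]
    all_goals simp [zeroExtend, hi, hj]
  · rw [lmat_eq_one (by omega), Matrix.one_mul, if_neg (by omega), add_zero]

theorem Lmat_succ (m : ℕ) (u : ℕ → ℝ) :
    Lmat (n := n) (m + 1) u = lmat m (u m) * Lmat m u := by
  simp [Lmat, List.range_succ]

theorem zeroExtend_Lmat_mul_zero (m : ℕ) (u : ℕ → ℝ) (M : Matrix (Fin n) (Fin n) ℝ) (j : ℕ) :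
    zeroExtend (Lmat m u * M) 0 j = zeroExtend M 0 j := by
  induction m with
  | zero => simp [Lmat]
  | succ m ih => simp [Lmat_succ, Matrix.mul_assoc, zeroExtend_lmat_mul, ih]

theorem zeroExtend_Lmat_mul_succ (m : ℕ) (u : ℕ → ℝ) (M : Matrix (Fin n) (Fin n) ℝ) (i j : ℕ) :
    zeroExtend (Lmat m u * M) (i + 1) j =
      zeroExtend M (i + 1) j +
        if i < m ∧ i + 1 < n then u i * zeroExtend (Lmat m u * M) i j else 0 := by
  induction m with
  | zero => simp [Lmat]
  | succ m ih =>
    rw [Lmat_succ, Matrix.mul_assoc, zeroExtend_lmat_mul, zeroExtend_lmat_mul, ih]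
    grind

theorem Delta_Lmat_mul (m : ℕ) (u : ℕ → ℝ) (M : Matrix (Fin n) (Fin n) ℝ) (k m' : ℕ) :
    Delta (Lmat m u * M) k m' = Delta M k m' := by
  cases k with
  | zero => rw [Delta_zero, Delta_zero]
  | succ k =>
    refine det_eq_of_forall_row_eq_smul_add_pred
      (fun i => if (i : ℕ) < m ∧ (i : ℕ) + 1 < n then u i else 0)
      (fun j => zeroExtend_Lmat_mul_zero m u M _) fun i j => ?_
    rw [ite_mul, zero_mul]
    exact zeroExtend_Lmat_mul_succ m u M i _

theorem det_Lmat (m : ℕ) (u : ℕ → ℝ) : (Lmat (n := n) m u).det = 1 := by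
  rw [← Delta_self, ← Matrix.mul_one (Lmat m u), Delta_Lmat_mul, Delta_self, det_one]

theorem mul_wbar_apply (M : Matrix (Fin n) (Fin n) ℝ) (i j : Fin n) :
    (M * wbar n) i j = (-1) ^ (j : ℕ) * M i j.rev := by
  rw [Matrix.mul_apply, Finset.sum_eq_single j.rev]
  · have hj : n - 1 - (n - (j + 1)) = (j : ℕ) := by omega
    simp [wbar, hj, mul_comm]
  · intro x _ hx
    have hxj : (j : ℕ) ≠ n - 1 - x := fun h => hx (Fin.ext (by rw [Fin.val_rev]; omega))
    simp [wbar, hxj]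
  · simp

/-- The parameter `u^{q+1}_{p+1}` of the factor `L_{q+1}` (`q` and `p` are 0-based). -/
noncomputable def multiplier (b : Matrix (Fin n) (Fin n) ℝ) (q p : ℕ) : ℝ :=
  Delta b p (q + 1) * Delta b (p + 2) (q + 2) / (Delta b (p + 1) (q + 1) * Delta b (p + 1) (q + 2))

/-- `M` is upper triangular, except that the triangle in its columns `0, …, r` is turned upside
down. The indices are 0-based, and zero extension lets them range over `ℕ`. -/
structure IsFlippedTriangular (r : ℕ) (M : Matrix (Fin n) (Fin n) ℝ) : Prop where
  left : ∀ i j, j ≤ r → r < i + j → zeroExtend M i j = 0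
  right : ∀ i j, r < j → j < i → zeroExtend M i j = 0

namespace IsFlippedTriangular

variable {r : ℕ} {M : Matrix (Fin n) (Fin n) ℝ}

theorem of_isUpperTriangular (hM : M.IsUpperTriangular) : IsFlippedTriangular 0 M := by
  have below_diag (i j : ℕ) (hij : j < i) : zeroExtend M i j = 0 := by
    unfold zeroExtend
    split_ifs
    · exact hM hij
    · rfl
  exact ⟨fun i j hj hij => below_diag i j (by omega), fun i j _ hij => below_diag i j hij⟩

theorem multiplier_mul (hM : IsFlippedTriangular r M) {p : ℕ} (hp : p ≤ r)
    (h₁ : Delta M (p + 1) (r + 1) ≠ 0) (h₂ : Delta M (p + 1) (r + 2) ≠ 0) :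
    multiplier M r p * zeroExtend M p (r + 1) = zeroExtend M (p + 1) (r + 1) := by
  obtain ⟨d, rfl⟩ := Nat.exists_eq_add_of_le' hp
  have upper : Delta M (p + 1) (d + p + 2) =
      zeroExtend M p (d + p + 1) * Delta M p (d + p + 1) := by
    have := Delta_succ_of_last_row_eq_zero_left M p (d + 1)
      fun j hj => hM.left _ _ (by omega) (by omega)
    rwa [add_right_comm d 1 p] at this
  have lower : Delta M (p + 2) (d + p + 2) =
      zeroExtend M (p + 1) (d + p + 1) * Delta M (p + 1) (d + p + 1) :=
    Delta_succ_of_last_row_eq_zero_left M (p + 1) d fun j hj => hM.left _ _ (by omega) (by omega)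
  rw [multiplier, div_mul_eq_mul_div, div_eq_iff (mul_ne_zero h₁ h₂), lower, upper]
  ring

theorem of_Lmat_mul {B : Matrix (Fin n) (Fin n) ℝ} {u : ℕ → ℝ}
    (hM : IsFlippedTriangular r (Lmat (r + 1) u * B))
    (hu : ∀ p ≤ r, u p * zeroExtend (Lmat (r + 1) u * B) p (r + 1) =
      zeroExtend (Lmat (r + 1) u * B) (p + 1) (r + 1)) :
    IsFlippedTriangular (r + 1) B := by
  set M := Lmat (r + 1) u * B
  have changed (p j : ℕ) (hp : p ≤ r) (hpn : p + 1 < n) :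
      zeroExtend M (p + 1) j = zeroExtend B (p + 1) j + u p * zeroExtend M p j := by
    rw [zeroExtend_Lmat_mul_succ, if_pos (by omega)]
  have unchanged (p j : ℕ) (hp : r < p) : zeroExtend M (p + 1) j = zeroExtend B (p + 1) j := by
    rw [zeroExtend_Lmat_mul_succ, if_neg (by omega), add_zero]
  constructor
  · rintro (_ | p) j hj hij
    · omega
    rcases le_or_gt n (p + 1) with hpn | hpn
    · exact zeroExtend_eq_zero_of_le_row B hpn j
    rcases le_or_gt p r with hp | hp <;> rcases hj.lt_or_eq with hj | rfl
    · have hrow := changed p j hp hpn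
      rwa [hM.left (p + 1) j (by omega) (by omega), hM.left p j (by omega) (by omega), mul_zero,
        add_zero, eq_comm] at hrow
    · have hrow := changed p (r + 1) hp hpn
      rwa [hu p hp, right_eq_add] at hrow
    · rw [← unchanged p j hp, hM.left _ _ (by omega) (by omega)]
    · rw [← unchanged p (r + 1) hp, hM.right _ _ (by omega) (by omega)]
  · rintro (_ | p) j hj hij
    · omega
    rw [← unchanged p j (by omega), hM.right _ _ (by omega) hij]

theorem isUpperTriangular_mul_wbar (hM : IsFlippedTriangular (n - 1) M) :
    (M * wbar n).IsUpperTriangular := by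
  intro i j hij
  have hij : (j : ℕ) < i := hij
  rw [mul_wbar_apply, ← zeroExtend_val M,
    hM.left _ _ (by rw [Fin.val_rev]; omega) (by rw [Fin.val_rev]; omega), mul_zero]

theorem Delta_succ_eq_mul_wbar_apply_self (hM : IsFlippedTriangular (n - 1) M) (i : Fin n) :
    Delta M (i + 1) n = (M * wbar n) i i * Delta M i n := by
  have hn : (i.rev : ℕ) + (i + 1) = n := by rw [Fin.val_rev]; omega
  have hexp := Delta_succ_of_last_row_eq_zero_right M i i.rev
    fun j hj => hM.left _ _ (by omega) (by omega)
  rwa [hn, zeroExtend_val, ← mul_wbar_apply] at hexp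

end IsFlippedTriangular

/-- The matrix `L_r(u^r)⁻¹ ⋯ L_1(u^1)⁻¹ b` left after `r` stages of elimination. -/
noncomputable def reduction (b : Matrix (Fin n) (Fin n) ℝ) : ℕ → Matrix (Fin n) (Fin n) ℝ
  | 0 => b
  | r + 1 => (Lmat (r + 1) (multiplier b r))⁻¹ * reduction b r

section Reduction

variable (b : Matrix (Fin n) (Fin n) ℝ)

theorem Lmat_mul_reduction_succ (r : ℕ) :
    Lmat (r + 1) (multiplier b r) * reduction b (r + 1) = reduction b r :=
  mul_nonsing_inv_cancel_left _ _ (by rw [det_Lmat]; exact isUnit_one)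

theorem prod_Lmat_mul_reduction (r : ℕ) :
    ((List.range r).map fun q => Lmat (q + 1) (multiplier b q)).prod * reduction b r = b := by
  induction r with
  | zero => simp [reduction]
  | succ r ih => simp [List.range_succ, Matrix.mul_assoc, Lmat_mul_reduction_succ, ih]

theorem Delta_reduction (r k m : ℕ) : Delta (reduction b r) k m = Delta b k m := by
  induction r with
  | zero => rfl
  | succ r ih => rw [← ih, ← Lmat_mul_reduction_succ b r, Delta_Lmat_mul]

theorem multiplier_reduction (r : ℕ) : multiplier (reduction b r) = multiplier b := by
  funext q p
  simp only [multiplier, Delta_reduction]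

variable {b}

theorem isFlippedTriangular_reduction (htri : b.IsUpperTriangular)
    (hne : ∀ k m : ℕ, 1 ≤ k → k ≤ m → m ≤ n → Delta b k m ≠ 0) {r : ℕ} (hr : r ≤ n - 1) :
    IsFlippedTriangular r (reduction b r) := by
  induction r with
  | zero => exact .of_isUpperTriangular htri
  | succ r ih =>
    have hM := ih (by omega)
    have clears (p : ℕ) (hp : p ≤ r) : multiplier b r p * zeroExtend (reduction b r) p (r + 1) =
        zeroExtend (reduction b r) (p + 1) (r + 1) := by
      rw [← multiplier_reduction b r]
      apply hM.multiplier_mul hp <;> rw [Delta_reduction] <;>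
        exact hne _ _ (by omega) (by omega) (by omega)
    rw [← Lmat_mul_reduction_succ b r] at hM clears
    exact hM.of_Lmat_mul clears

end Reduction

end

theorem stmt1_general {n : ℕ} (b : Matrix (Fin n) (Fin n) ℝ)
    (htri : ∀ i j : Fin n, j < i → b i j = 0)
    (hne : ∀ k m : ℕ, 1 ≤ k → k ≤ m → m ≤ n → Delta b k m ≠ 0) :
    ∃ U : Matrix (Fin n) (Fin n) ℝ,
      (∀ i : Fin n, U i i = 1) ∧ (∀ i j : Fin n, j < i → U i j = 0) ∧
      b * wbar n =
        ((List.range (n - 1)).map fun q => Lmat (n := n) (q + 1) (multiplier b q)).prod *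
          diagonal (fun i : Fin n => Delta b (i + 1) n / Delta b i n) * U := by
  have hM := isFlippedTriangular_reduction (fun i j => htri i j) hne le_rfl
  set M := reduction b (n - 1)
  have hne' (k : ℕ) (hk : k ≤ n) : Delta b k n ≠ 0 := by
    rcases Nat.eq_zero_or_pos k with rfl | hpos
    · rw [Delta_zero]; exact one_ne_zero
    · exact hne k n hpos hk le_rfl
  have hdiag (i : Fin n) : (M * wbar n) i i = Delta b (i + 1) n / Delta b i n := by
    have hsucc := hM.Delta_succ_eq_mul_wbar_apply_self i
    rw [Delta_reduction, Delta_reduction] at hsucc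
    rw [eq_div_iff (hne' i i.2.le), hsucc]
  obtain ⟨U, hU_diag, hU_tri, hU⟩ := exists_unitriangular_eq_diagonal_mul
    hM.isUpperTriangular_mul_wbar fun i => hdiag i ▸ div_ne_zero (hne' _ i.2) (hne' _ i.2.le)
  refine ⟨U, hU_diag, fun i j hij => hU_tri hij, ?_⟩
  simp only [hdiag] at hU
  rw [Matrix.mul_assoc, ← hU, ← Matrix.mul_assoc, prod_Lmat_mul_reduction]

/-- Gauss (LDU) decomposition of `b·w̄_0` for a totally positive
upper triangular matrix `b`, with explicit `L` and `D` in terms of the minors of `b`. -/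
theorem stmt1 (n : ℕ) (hn : 2 ≤ n) (b : Matrix (Fin n) (Fin n) ℝ)
    (htri : ∀ i j : Fin n, j < i → b i j = 0)
    (hpos : ∀ k m : ℕ, 1 ≤ k → k ≤ m → m ≤ n → 0 < Delta b k m) :
    ∃ U : Matrix (Fin n) (Fin n) ℝ,
      (∀ i : Fin n, U i i = 1) ∧ (∀ i j : Fin n, j < i → U i j = 0) ∧
      b * wbar n =
        (((List.range (n - 1)).map (fun q => Lmat (n := n) (q + 1) (fun p =>
            Delta b p (q + 1) * Delta b (p + 2) (q + 2) /
              (Delta b (p + 1) (q + 1) * Delta b (p + 1) (q + 2))))).prod) *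
          Matrix.diagonal (fun i : Fin n => Delta b ((i : ℕ) + 1) n / Delta b (i : ℕ) n) * U := by
  exact stmt1_general b htri fun k m h1 hkm hm => (hpos k m h1 hkm hm).ne'
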